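/- arXiv:1010.2894 — 2 statements merged into one kernel-verified Lean document; each statement's English description precedes it below -/
import Mathlib

section
/- Let (E, ℰ) be a standard Borel (Lusin) space and let ν be a Markov kernel on E. Then there exist a measurable space (F′, 𝓕′), a probability measure μ′ on (F′, 𝓕′), and a BIJECTIVE measurable map T̃′ : E × F′ → E × F′ with measurable inverse, whose first component X′ : E × F′ → E satisfies: for every x ∈ E, the pushforward of μ′ under y ↦ X′(x, y) equals ν(x, ·). That is, every Markov kernel on a standard Borel space admits a dilation by an invertible dynamical system. -/
open MeasureTheory ProbabilityTheory

/-!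
Represent the kernel by a random map, `ν x = (f x)_* λ` with `λ` the Lebesgue measure on
`I = [0, 1]`. The map `(x, y) ↦ f x y` is made injective by remembering its argument:
`(x, y) ↦ (f x y, (x, y))` embeds `E × I` into `E × (E × I)` with measurable range, a graph.
Exchanging `E × I` with that range is an involution of the disjoint union of `E × I` and
`E × (E × I)`, which is the product of `E` with `F' = I ⊔ (E × I)`. Let `μ'` be the copy of `λ`
carried by the summand `I` of `F'`.
-/

section SwapRange

variable {α β : Type*}

/-- The self-map of `α ⊕ β` that exchanges `a` and `e a` for every `a : α`, and fixes the points of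
`β` outside the range of `e`. It is meant for injective `e`. -/
noncomputable def swapRange (e : α → β) : α ⊕ β → α ⊕ β :=
  Sum.elim (Sum.inr ∘ e) (Function.extend e Sum.inl Sum.inr)

lemma swapRange_inl (e : α → β) (a : α) : swapRange e (.inl a) = .inr (e a) :=
  rfl

lemma swapRange_inr_apply {e : α → β} (he : Function.Injective e) (a : α) :
    swapRange e (.inr (e a)) = .inl a :=
  he.extend_apply _ _ a

lemma swapRange_inr_of_notMem_range {e : α → β} {b : β} (hb : b ∉ Set.range e) :
    swapRange e (.inr b) = .inr b :=
  Function.extend_apply' _ _ b hb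

lemma swapRange_involutive {e : α → β} (he : Function.Injective e) :
    Function.Involutive (swapRange e) := by
  rintro (a | b)
  · rw [swapRange_inl, swapRange_inr_apply he]
  · by_cases hb : b ∈ Set.range e
    · obtain ⟨a, rfl⟩ := hb
      rw [swapRange_inr_apply he, swapRange_inl]
    · rw [swapRange_inr_of_notMem_range hb, swapRange_inr_of_notMem_range hb]

lemma measurable_swapRange [MeasurableSpace α] [MeasurableSpace β] {e : α → β}
    (he : MeasurableEmbedding e) : Measurable (swapRange e) :=
  (measurable_inr.comp he.measurable).sumElim (he.measurable_extend measurable_inl measurable_inr)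

end SwapRange

lemma measurableEmbedding_prodMk_self {α β : Type*} [MeasurableSpace α] [MeasurableSpace β]
    [MeasurableEq β] {g : α → β} (hg : Measurable g) : MeasurableEmbedding fun a ↦ (g a, a) := by
  have range_eq : Set.range (fun a ↦ (g a, a)) = {p : β × α | p.1 = g p.2} := by
    ext ⟨b, a⟩
    simp [eq_comm]
  refine .of_measurable_inverse (hg.prodMk measurable_id) ?_ measurable_snd fun _ ↦ rfl
  rw [range_eq]
  exact measurableSet_eq_fun measurable_fst (hg.comp measurable_snd)

section GraphSwap

variable {α β : Type*} [MeasurableSpace α] [MeasurableSpace β]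

/-- The invertible dynamics extending the random map `f`, as a self-map of `α × (β ⊕ α × β)`: it
exchanges `(x, inl y)` with `(f x y, inr (x, y))`, and fixes every other point. -/
noncomputable def graphSwap (f : α → β → α) : α × (β ⊕ α × β) → α × (β ⊕ α × β) :=
  let d := MeasurableEquiv.prodSumDistrib α β (α × β)
  d.symm ∘ swapRange (fun p ↦ (f p.1 p.2, p)) ∘ d

lemma graphSwap_inl (f : α → β → α) (x : α) (y : β) :
    graphSwap f (x, .inl y) = (f x y, .inr (x, y)) :=
  rfl

lemma graphSwap_involutive (f : α → β → α) : Function.Involutive (graphSwap f) := by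
  have graph_injective : Function.Injective fun p : α × β ↦ (f p.1 p.2, p) :=
    fun _ _ h ↦ congrArg Prod.snd h
  intro p
  simp only [graphSwap, Function.comp_apply, MeasurableEquiv.apply_symm_apply,
    swapRange_involutive graph_injective _, MeasurableEquiv.symm_apply_apply]

variable [MeasurableEq α] {f : α → β → α}

lemma measurable_graphSwap (hf : Measurable (Function.uncurry f)) : Measurable (graphSwap f) :=
  (MeasurableEquiv.measurable _).comp <|
    (measurable_swapRange (measurableEmbedding_prodMk_self hf)).comp (MeasurableEquiv.measurable _)

lemma map_fst_graphSwap (hf : Measurable (Function.uncurry f)) (μ : Measure β) (x : α) :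
    (μ.map Sum.inl).map (fun z ↦ (graphSwap f (x, z)).1) = μ.map (f x) := by
  have measurable_section : Measurable fun z ↦ (graphSwap f (x, z)).1 :=
    measurable_fst.comp ((measurable_graphSwap hf).comp measurable_prodMk_left)
  rw [Measure.map_map measurable_section measurable_inl]
  simp only [Function.comp_def, graphSwap_inl]

end GraphSwap

theorem markov_kernel_invertible_dilation_exists_general.{u}
    {E : Type u} [MeasurableSpace E] [StandardBorelSpace E] (ν : Kernel E E) [IsMarkovKernel ν] :
    ∃ (F' : Type u) (_ : MeasurableSpace F') (μ' : Measure F'), IsProbabilityMeasure μ' ∧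
      ∃ T' : E × F' → E × F', Measurable T' ∧ Function.Involutive T' ∧
        ∀ x, μ'.map (fun y ↦ (T' (x, y)).1) = ν x := by
  cases isEmpty_or_nonempty E with
  | inl hE =>
    exact ⟨PUnit, inferInstance, .dirac .unit, inferInstance, id, measurable_id, fun _ ↦ rfl,
      hE.elim⟩
  | inr hE =>
    obtain ⟨f, hf, map_f⟩ := ν.exists_measurable_map_eq_unitInterval
    exact ⟨unitInterval ⊕ E × unitInterval, inferInstance, volume.map Sum.inl,
      Measure.isProbabilityMeasure_map measurable_inl.aemeasurable, graphSwap f,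
      measurable_graphSwap hf, graphSwap_involutive f,
      fun x ↦ (map_fst_graphSwap hf volume x).trans (map_f x)⟩

/-- Every Markov kernel `ν` on a standard Borel (Lusin) space `E` admits a
dilation by an *invertible* dynamical system: there are a measurable space `F'`,
a probability measure `μ'` on `F'`, and a bijective measurable map
`T' : E × F' → E × F'` with measurable inverse, whose first component
`X'(x,y) = (T'(x,y)).1` satisfies `(X'(x, ·))_* μ' = ν(x, ·)` for all `x`. -/
theorem markov_kernel_invertible_dilation_exists
    {E : Type} [MeasurableSpace E] [StandardBorelSpace E]
    (ν : Kernel E E) [IsMarkovKernel ν] :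
    ∃ (F' : Type) (_ : MeasurableSpace F') (μ' : Measure F'),
      IsProbabilityMeasure μ' ∧
      ∃ (T' : E × F' → E × F') (S : E × F' → E × F'),
        Measurable T' ∧ Measurable S ∧
        Function.LeftInverse S T' ∧ Function.RightInverse S T' ∧
        (∀ x : E, Measure.map (fun y => (T' (x, y)).1) μ' = ν x) := by
  obtain ⟨F', hF', μ', hμ', T', hT', T'_involutive, map_T'⟩ :=
    markov_kernel_invertible_dilation_exists_general ν
  exact ⟨F', hF', μ', hμ', T', T', hT', hT', T'_involutive, T'_involutive, map_T'⟩
end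

section
/- Let (E, ℰ) be a standard Borel (Lusin) space and let ν be a Markov kernel on E whose Markov operator L is invertible in the category of Markov operators; that is, there exists a Markov kernel μ with Markov operator M such that M ∘ L = L ∘ M = identity on bounded measurable functions (equivalently, the kernel compositions ν ∘ μ and μ ∘ ν both equal the identity kernel x ↦ δ_x). Then ν is deterministic: for every x ∈ E, ν(x, ·) is a Dirac mass δ_{T̃(x)} for some measurable map T̃ : E → E. -/
open MeasureTheory ProbabilityTheory

/-!
Let `κ` and `η` be mutually inverse Markov kernels. The average `δ_x` of the measures `η y` under
`κ x` gives no mass to the complement of `{x}`, so for `κ x`-almost every `y` neither does `η y`,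
that is, `η y = δ_x`. Pick one such `y`; then `κ x = (κ ∘ₖ η) y = δ_y`.
-/

section Dirac

variable {α β γ : Type*} [MeasurableSpace α] [MeasurableSpace β] [MeasurableSpace γ]

theorem measurable_of_measurable_dirac {f : α → β}
    (hf : Measurable fun a ↦ Measure.dirac (f a)) : Measurable f := by
  intro s hs
  have preimage_eq : f ⁻¹' s = (fun a ↦ Measure.dirac (f a) s) ⁻¹' {1} := by
    ext a
    simp [Measure.dirac_apply' _ hs, Set.indicator_eq_one_iff_mem]
  rw [preimage_eq]
  exact (Measure.measurable_coe hs).comp hf (measurableSet_singleton 1)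

theorem eq_dirac_of_ae_eq {m : Measure α} [IsProbabilityMeasure m] {a : α}
    (h : ∀ᵐ x ∂m, x = a) : m = Measure.dirac a :=
  calc
    m = m.map id := Measure.map_id.symm
    _ = m.map (fun _ ↦ a) := Measure.map_congr h
    _ = Measure.dirac a := by rw [Measure.map_const, measure_univ, one_smul]

theorem ae_eq_dirac_of_comp_eq_dirac [MeasurableSingletonClass γ] {κ : Kernel α β}
    {η : Kernel β γ} [IsMarkovKernel η] {a : α} {c : γ} (h : (η ∘ₖ κ) a = Measure.dirac c) :
    ∀ᵐ b ∂κ a, η b = Measure.dirac c := by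
  have ae_eq : ∀ᵐ z ∂(η ∘ₖ κ) a, z = c := by simp [h]
  filter_upwards [Kernel.ae_ae_of_ae_comp ae_eq] with b hb using eq_dirac_of_ae_eq hb

theorem comp_apply_of_apply_eq_dirac {κ : Kernel α β} {η : Kernel β γ} {a : α} {b : β}
    (h : κ a = Measure.dirac b) : (η ∘ₖ κ) a = η b := by
  rw [Kernel.comp_apply, h, Measure.dirac_bind η.measurable]

theorem exists_eq_dirac_of_comp_eq_id [MeasurableSingletonClass α] {κ : Kernel α β}
    {η : Kernel β α} [IsMarkovKernel κ] [IsMarkovKernel η] (hηκ : η ∘ₖ κ = Kernel.id)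
    (hκη : κ ∘ₖ η = Kernel.id) (a : α) : ∃ b, κ a = Measure.dirac b := by
  have hη : ∀ᵐ b ∂κ a, η b = Measure.dirac a :=
    ae_eq_dirac_of_comp_eq_dirac (by rw [hηκ, Kernel.id_apply])
  obtain ⟨b, hb⟩ := hη.exists
  refine ⟨b, ?_⟩
  calc
    κ a = (κ ∘ₖ η) b := (comp_apply_of_apply_eq_dirac hb).symm
    _ = Measure.dirac b := by rw [hκη, Kernel.id_apply]

end Dirac

theorem invertible_markov_kernel_is_deterministic_general
    {α β : Type*} [MeasurableSpace α] [MeasurableSingletonClass α] [MeasurableSpace β]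
    (κ : Kernel α β) (η : Kernel β α) [IsMarkovKernel κ] [IsMarkovKernel η]
    (hηκ : η ∘ₖ κ = Kernel.id) (hκη : κ ∘ₖ η = Kernel.id) :
    ∃ T : α → β, Measurable T ∧ ∀ a : α, κ a = Measure.dirac (T a) := by
  choose T hT using exists_eq_dirac_of_comp_eq_id hηκ hκη
  have dirac_measurable : Measurable fun a ↦ Measure.dirac (T a) := by
    simpa only [← hT] using κ.measurable
  exact ⟨T, measurable_of_measurable_dirac dirac_measurable, hT⟩

/-- If a Markov kernel `ν` on a standard Borel (Lusin) space is invertible in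
the category of Markov operators — that is, there is a Markov kernel `μ` whose
compositions with `ν` in both orders are the identity kernel `x ↦ δ_x` — then
`ν` is deterministic: `ν(x,·) = δ_{T̃(x)}` for some measurable `T̃ : E → E`. -/
theorem invertible_markov_kernel_is_deterministic
    {E : Type*} [MeasurableSpace E] [StandardBorelSpace E]
    (ν μ : Kernel E E) [IsMarkovKernel ν] [IsMarkovKernel μ]
    (hμν : μ ∘ₖ ν = Kernel.id) (hνμ : ν ∘ₖ μ = Kernel.id) :
    ∃ T' : E → E, Measurable T' ∧ ∀ x : E, ν x = Measure.dirac (T' x) := by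
  exact invertible_markov_kernel_is_deterministic_general ν μ hμν hνμ
end
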